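/- arXiv:1511.06330 — 3 statements merged into one kernel-verified Lean document; each statement's English description precedes it below -/
import Mathlib

section
/- Let F be a field of characteristic different from 2, let n ≥ 1, let b_1, ..., b_t ∈ F be nonzero, and let U ∈ M_n(F) be symmetric. The following are equivalent: (i) U is positive semidefinite at every field ordering P of F satisfying b_1 >_P 0, ..., b_t >_P 0; (ii) for each tuple e = (e_1, ..., e_t) ∈ {0,1}^t there exist finitely many matrices A_{e,1}, ..., A_{e,N} ∈ M_n(F) such that U = Σ_{e ∈ {0,1}^t} b_1^{e_1}···b_t^{e_t} · Σ_{i=1}^{N} A_{e,i}ᵀ A_{e,i}. -/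
open Matrix BigOperators

/-- A field ordering of `F`, given by its cone of nonnegative elements.
This is equivalent to a linear order making `F` a linearly ordered field. -/
structure FieldOrdering (F : Type*) [Field F] where
  nonneg : F → Prop
  add_nonneg : ∀ {x y : F}, nonneg x → nonneg y → nonneg (x + y)
  mul_nonneg : ∀ {x y : F}, nonneg x → nonneg y → nonneg (x * y)
  total : ∀ x : F, nonneg x ∨ nonneg (-x)
  eq_zero_of : ∀ {x : F}, nonneg x → nonneg (-x) → x = 0

/-- `x >_P 0`. -/
def FieldOrdering.pos {F : Type*} [Field F] (P : FieldOrdering F) (x : F) : Prop :=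
  P.nonneg x ∧ x ≠ 0

/-- A matrix is positive semidefinite at an ordering `P` if `xᵀMx ≥_P 0` for all `x`. -/
def Matrix.IsPSDAt {F : Type*} [Field F] {n : ℕ} (P : FieldOrdering F)
    (M : Matrix (Fin n) (Fin n) F) : Prop :=
  ∀ x : Fin n → F, P.nonneg (x ⬝ᵥ (M *ᵥ x))

/-- A matrix is positive definite at an ordering `P` if `xᵀMx >_P 0` for all `x ≠ 0`. -/
def Matrix.IsPDAt {F : Type*} [Field F] {n : ℕ} (P : FieldOrdering F)
    (M : Matrix (Fin n) (Fin n) F) : Prop :=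
  ∀ x : Fin n → F, x ≠ 0 → P.pos (x ⬝ᵥ (M *ᵥ x))

/-!
Diagonalise `U` as a congruence `Qᵀ D Q`. The diagonal entries of `D` are values of the quadratic
form `x ↦ xᵀ U x`, and by the Artin–Schreier theorem an element that is nonnegative at every
ordering making the `b j` positive lies in the preordering generated by the `b j`, so it is a sum
of terms `b^e * c ^ 2` with `e ∈ {0,1}^t`. The identity
`b^e * b^e' = b^(e xor e') * (b^(e and e'))^2` is what keeps the exponents in `{0,1}`.
-/

section Orderings

variable {R F : Type*} [CommRing R] [Field F]

theorem bddAbove_ringPreordering_of_isChain {c : Set (RingPreordering R)} (hc : IsChain (· ≤ ·) c)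
    (hne : c.Nonempty) : BddAbove c := by
  have : Nonempty c := hne.to_subtype
  have hdir : Directed (· ≤ ·) fun P : c => P.1.toSubsemiring := hc.directed
  obtain ⟨P₀, hP₀⟩ := hne
  let Q : RingPreordering R :=
    { toSubsemiring := ⨆ P : c, P.1.toSubsemiring
      mem_of_isSquare' := fun hx =>
        (Subsemiring.mem_iSup_of_directed hdir).2 ⟨⟨P₀, hP₀⟩, P₀.mem_of_isSquare hx⟩
      neg_one_notMem' := fun h =>
        let ⟨P, hP⟩ := (Subsemiring.mem_iSup_of_directed hdir).1 h
        P.1.neg_one_notMem hP }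
  exact ⟨Q, fun P hP => le_iSup (fun P : c => P.1.toSubsemiring) ⟨P, hP⟩⟩

theorem exists_ringPreordering_ge_neg_mem (P : RingPreordering F) {a : F} (ha : a ∉ P) :
    ∃ Q, P ≤ Q ∧ -a ∈ Q := by
  let S : Set F := {x | ∃ s ∈ P, ∃ t ∈ P, x = s - a * t}
  have neg_one_notMem : -1 ∉ S := by
    rintro ⟨s, hs, t, ht, h⟩
    have hat : a * t = 1 + s := by linear_combination h
    have ht0 : t ≠ 0 := by
      rintro rfl
      exact P.neg_one_notMem (by simpa [h] using hs)
    refine ha ?_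
    rw [(eq_mul_inv_iff_mul_eq₀ ht0).2 hat]
    exact mul_mem (add_mem (one_mem P) hs) (RingPreordering.inv_mem ht)
  refine ⟨RingPreordering.mk' S ?add ?mul ?sq neg_one_notMem,
    fun s hs => ⟨s, hs, 0, zero_mem P, by ring⟩, ⟨0, zero_mem P, 1, one_mem P, by ring⟩⟩
  case add =>
    rintro _ _ ⟨s, hs, t, ht, rfl⟩ ⟨s', hs', t', ht', rfl⟩
    exact ⟨s + s', add_mem hs hs', t + t', add_mem ht ht', by ring⟩
  case mul =>
    rintro _ _ ⟨s, hs, t, ht, rfl⟩ ⟨s', hs', t', ht', rfl⟩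
    exact ⟨s * s' + a * a * (t * t'),
      add_mem (mul_mem hs hs') (mul_mem (P.mul_self_mem a) (mul_mem ht ht')),
      s * t' + t * s', add_mem (mul_mem hs ht') (mul_mem ht hs'), by ring⟩
  case sq => exact fun x => ⟨x * x, P.mul_self_mem x, 0, zero_mem P, by ring⟩

theorem exists_ringPreordering_ge_hasMemOrNegMem (P : RingPreordering F) :
    ∃ Q, P ≤ Q ∧ HasMemOrNegMem Q := by
  obtain ⟨Q, hPQ, hQ⟩ := zorn_le_nonempty_Ici₀ P
    (fun c _ hc y hy => bddAbove_ringPreordering_of_isChain hc ⟨y, hy⟩) P le_rfl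
  refine ⟨Q, hPQ, ⟨fun a => or_iff_not_imp_left.2 fun ha => ?_⟩⟩
  obtain ⟨Q', hQQ', ha'⟩ := exists_ringPreordering_ge_neg_mem Q ha
  exact hQ hQQ' ha'

namespace FieldOrdering

/-- The field ordering whose nonnegative cone is a total preordering. -/
def ofRingPreordering (P : RingPreordering F) [HasMemOrNegMem P] : FieldOrdering F where
  nonneg x := x ∈ P
  add_nonneg := add_mem
  mul_nonneg := mul_mem
  total := mem_or_neg_mem P
  eq_zero_of := RingPreordering.eq_zero_of_mem_of_neg_mem

variable (P : FieldOrdering F)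

theorem mul_self_nonneg (x : F) : P.nonneg (x * x) := by
  rcases P.total x with h | h
  · exact P.mul_nonneg h h
  · simpa using P.mul_nonneg h h

/-- The nonnegative cone of a field ordering, as a subsemiring. -/
def nonnegSubsemiring : Subsemiring F where
  carrier := {x | P.nonneg x}
  zero_mem' := by simpa using P.mul_self_nonneg 0
  one_mem' := by simpa using P.mul_self_nonneg 1
  add_mem' := P.add_nonneg
  mul_mem' := P.mul_nonneg

end FieldOrdering

theorem subsemiring_eq_top_of_neg_one_mem (h2 : (2 : F) ≠ 0) {S : Subsemiring F}
    (hS : ∀ x, x * x ∈ S) (h : -1 ∈ S) : S = ⊤ := by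
  refine eq_top_iff.2 fun a _ => ?_
  have ha : a = (a + 1) / 2 * ((a + 1) / 2) + -1 * ((a - 1) / 2 * ((a - 1) / 2)) := by
    field_simp
    ring
  rw [ha]
  exact add_mem (hS _) (mul_mem h (hS _))

theorem mem_iff_forall_fieldOrdering_nonneg (h2 : (2 : F) ≠ 0) {S : Subsemiring F}
    (hS : ∀ x, x * x ∈ S) {a : F} :
    a ∈ S ↔ ∀ P : FieldOrdering F, S ≤ P.nonnegSubsemiring → P.nonneg a := by
  refine ⟨fun ha P hP => hP ha, fun h => ?_⟩
  by_contra ha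
  have hneg : -1 ∉ S := fun h' =>
    ha (subsemiring_eq_top_of_neg_one_mem h2 hS h' ▸ Subsemiring.mem_top a)
  let T : RingPreordering F := .mk' S add_mem mul_mem hS hneg
  obtain ⟨T', hTT', ha'⟩ := exists_ringPreordering_ge_neg_mem T ha
  obtain ⟨Q, hTQ, _⟩ := exists_ringPreordering_ge_hasMemOrNegMem T'
  have haQ : a ∈ Q := h (.ofRingPreordering Q) fun x hx => hTQ (hTT' hx)
  have ha0 : a = 0 := RingPreordering.eq_zero_of_mem_of_neg_mem haQ (hTQ ha')
  exact ha (ha0 ▸ zero_mem S)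

end Orderings

section Preordering

variable {R : Type*} [CommSemiring R]

/-- The preordering generated by `B`. It is encoded as a `Subsemiring` rather than a
`RingPreordering` because it may contain `-1`. -/
def preorderingClosure (B : Set R) : Subsemiring R :=
  Subsemiring.closure (B ∪ {x | IsSquare x})

theorem mul_self_mem_preorderingClosure (B : Set R) (x : R) : x * x ∈ preorderingClosure B :=
  Subsemiring.subset_closure (.inr (.mul_self x))

theorem preorderingClosure_le_iff {B : Set R} {S : Subsemiring R} (hS : ∀ x, x * x ∈ S) :
    preorderingClosure B ≤ S ↔ B ⊆ S := by
  rw [preorderingClosure, Subsemiring.closure_le, Set.union_subset_iff, and_iff_left]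
  rintro _ ⟨x, rfl⟩
  exact hS x

end Preordering

section HermitianCone

variable {R m κ : Type*} [CommSemiring R] [Fintype m]

/-- The additive monoid of finite sums of `s • (Aᵀ * A)` with `s ∈ S`: the matrices that are
visibly positive semidefinite at every ordering at which all elements of `S` are nonnegative. -/
def hermitianCone (m : Type*) [Fintype m] (S : Set R) : AddSubmonoid (Matrix m m R) :=
  AddSubmonoid.closure {M | ∃ s ∈ S, ∃ A : Matrix m m R, M = s • (Aᵀ * A)}

variable {S T : Set R}

theorem smul_transpose_mul_self_mem_hermitianCone {s : R} (hs : s ∈ S) (A : Matrix m m R) :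
    s • (Aᵀ * A) ∈ hermitianCone m S :=
  AddSubmonoid.subset_closure ⟨s, hs, A, rfl⟩

theorem hermitianCone_le {C : AddSubmonoid (Matrix m m R)} :
    hermitianCone m S ≤ C ↔ ∀ s ∈ S, ∀ A : Matrix m m R, s • (Aᵀ * A) ∈ C := by
  rw [hermitianCone, AddSubmonoid.closure_le]
  exact ⟨fun h s hs A => h ⟨s, hs, A, rfl⟩, fun h _ ⟨s, hs, A, hM⟩ => hM ▸ h s hs A⟩

theorem hermitianCone_mono (h : S ⊆ T) : hermitianCone m S ≤ hermitianCone m T :=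
  hermitianCone_le.2 fun _ hs => smul_transpose_mul_self_mem_hermitianCone (h hs)

theorem hermitianCone_addSubmonoidClosure :
    hermitianCone m (AddSubmonoid.closure S : Set R) = hermitianCone m S := by
  refine le_antisymm (hermitianCone_le.2 fun s hs A => ?_)
    (hermitianCone_mono AddSubmonoid.subset_closure)
  induction hs using AddSubmonoid.closure_induction with
  | mem s hs => exact smul_transpose_mul_self_mem_hermitianCone hs A
  | zero => simp
  | add s t _ _ hs ht => simpa only [add_smul] using add_mem hs ht

theorem transpose_mul_mul_mem_hermitianCone {M : Matrix m m R} (hM : M ∈ hermitianCone m S)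
    (Q : Matrix m m R) : Qᵀ * M * Q ∈ hermitianCone m S := by
  induction hM using AddSubmonoid.closure_induction with
  | mem M hM =>
    obtain ⟨s, hs, A, rfl⟩ := hM
    have h : Qᵀ * s • (Aᵀ * A) * Q = s • ((A * Q)ᵀ * (A * Q)) := by
      simp only [transpose_mul, Matrix.mul_smul, Matrix.smul_mul, Matrix.mul_assoc]
    exact h ▸ smul_transpose_mul_self_mem_hermitianCone hs (A * Q)
  | zero => simp
  | add M N _ _ hM hN => simpa only [Matrix.mul_add, Matrix.add_mul] using add_mem hM hN

theorem diagonal_mem_hermitianCone [DecidableEq m] {d : m → R} (hd : ∀ i, d i ∈ S) :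
    diagonal d ∈ hermitianCone m S := by
  rw [← sum_single_eq_diagonal]
  refine sum_mem fun i _ => ?_
  have h : single i i (d i) = d i • ((single i i 1)ᵀ * single i i 1) := by simp
  exact h ▸ smul_transpose_mul_self_mem_hermitianCone (hd i) _

theorem dotProduct_mulVec_mem_of_mem_hermitianCone {S : Subsemiring R} (hS : ∀ x, x * x ∈ S)
    {M : Matrix m m R} (hM : M ∈ hermitianCone m (S : Set R)) (x : m → R) :
    x ⬝ᵥ (M *ᵥ x) ∈ S := by
  induction hM using AddSubmonoid.closure_induction with
  | mem M hM =>
    obtain ⟨s, hs, A, rfl⟩ := hM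
    have h : x ⬝ᵥ ((s • (Aᵀ * A)) *ᵥ x) = s * ∑ k, (A *ᵥ x) k * (A *ᵥ x) k := by
      rw [smul_mulVec, dotProduct_smul, smul_eq_mul, ← mulVec_mulVec, dotProduct_mulVec,
        vecMul_transpose, dotProduct]
    exact h ▸ mul_mem hs (sum_mem fun k _ => hS _)
  | zero => simp
  | add M N _ _ hM hN => simpa only [add_mulVec, dotProduct_add] using add_mem hM hN

theorem mem_hermitianCone_range_iff [Fintype κ] {w : κ → R} {M : Matrix m m R} :
    M ∈ hermitianCone m (Set.range w) ↔
      ∃ (N : ℕ) (A : κ → Fin N → Matrix m m R), M = ∑ k, w k • ∑ i, (A k i)ᵀ * A k i := by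
  constructor
  · intro hM
    induction hM using AddSubmonoid.closure_induction with
    | mem M hM =>
      classical
      obtain ⟨_, ⟨k, rfl⟩, A, rfl⟩ := hM
      refine ⟨1, Pi.single k fun _ => A, ?_⟩
      rw [Fintype.sum_eq_single k fun k' hk' => by simp [hk']]
      simp
    | zero => exact ⟨0, fun _ => Fin.elim0, by simp⟩
    | add M M' _ _ hM hM' =>
      obtain ⟨N, A, rfl⟩ := hM
      obtain ⟨N', A', rfl⟩ := hM'
      refine ⟨N + N', fun k => Fin.append (A k) (A' k), ?_⟩
      simp only [Fin.sum_univ_add, Fin.append_left, Fin.append_right, smul_add,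
        Finset.sum_add_distrib]
  · rintro ⟨N, A, rfl⟩
    simp only [Finset.smul_sum]
    exact sum_mem fun k _ => sum_mem fun i _ =>
      smul_transpose_mul_self_mem_hermitianCone (Set.mem_range_self k) (A k i)

end HermitianCone

section Diagonalization

variable {K m : Type*} [Field K] [Fintype m]

theorem exists_isUnit_isDiag_transpose_mul_mul [DecidableEq m] (h2 : (2 : K) ≠ 0)
    {U : Matrix m m K} (hU : U.IsSymm) : ∃ V : Matrix m m K, IsUnit V ∧ (Vᵀ * U * V).IsDiag := by
  have : Invertible (2 : K) := invertibleOfNonzero h2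
  let e := Pi.basisFun K m
  let B := Matrix.toBilin e U
  have hUB : LinearMap.BilinForm.toMatrix e B = U := LinearMap.BilinForm.toMatrix_toBilin e U
  have hB : LinearMap.IsSymm B :=
    ⟨(LinearMap.BilinForm.isSymm_toMatrix_iff_isSymm e).1 (hUB.symm ▸ hU) |>.eq⟩
  obtain ⟨v, hv⟩ := LinearMap.BilinForm.exists_orthogonal_basis hB
  let f := v.indexEquiv e
  let w := v.reindex f
  have : Invertible (e.toMatrix w) := e.invertibleToMatrix w
  refine ⟨e.toMatrix w, isUnit_of_invertible _, fun i j hij => ?_⟩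
  rw [← hUB, LinearMap.BilinForm.toMatrix_mul_basis_toMatrix]
  simpa [LinearMap.BilinForm.toMatrix_apply, w] using hv (f.symm.injective.ne hij)

theorem mem_hermitianCone_iff_forall_dotProduct_mulVec_mem (h2 : (2 : K) ≠ 0) {S : Subsemiring K}
    (hS : ∀ x, x * x ∈ S) {U : Matrix m m K} (hU : U.IsSymm) :
    U ∈ hermitianCone m (S : Set K) ↔ ∀ x : m → K, x ⬝ᵥ (U *ᵥ x) ∈ S := by
  classical
  refine ⟨dotProduct_mulVec_mem_of_mem_hermitianCone hS, fun h => ?_⟩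
  obtain ⟨V, hV, hdiag⟩ := exists_isUnit_isDiag_transpose_mul_mul h2 hU
  have hentry (i : m) : (Vᵀ * U * V).diag i = V.col i ⬝ᵥ (U *ᵥ V.col i) := by
    rw [diag_apply, Matrix.mul_assoc]
    rfl
  have hD : Vᵀ * U * V ∈ hermitianCone m (S : Set K) := by
    rw [← hdiag.diagonal_diag]
    exact diagonal_mem_hermitianCone fun i => hentry i ▸ h (V.col i)
  have hUV : U = V⁻¹ᵀ * (Vᵀ * U * V) * V⁻¹ := by
    have hdet : IsUnit V.det := (isUnit_iff_isUnit_det V).1 hV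
    have hdet' : IsUnit Vᵀ.det := V.det_transpose.symm ▸ hdet
    rw [transpose_nonsing_inv, Matrix.mul_assoc Vᵀ, nonsing_inv_mul_cancel_left _ _ hdet',
      mul_nonsing_inv_cancel_right _ _ hdet]
  exact hUV ▸ transpose_mul_mul_mem_hermitianCone hD V⁻¹

theorem mem_hermitianCone_preorderingClosure_iff (h2 : (2 : K) ≠ 0) (B : Set K) {U : Matrix m m K}
    (hU : U.IsSymm) :
    U ∈ hermitianCone m (preorderingClosure B : Set K) ↔
      ∀ P : FieldOrdering K, (∀ b ∈ B, P.nonneg b) → ∀ x : m → K, P.nonneg (x ⬝ᵥ (U *ᵥ x)) := by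
  have hB := mul_self_mem_preorderingClosure B
  have le_iff (P : FieldOrdering K) :
      preorderingClosure B ≤ P.nonnegSubsemiring ↔ ∀ b ∈ B, P.nonneg b :=
    preorderingClosure_le_iff P.mul_self_nonneg
  simp only [mem_hermitianCone_iff_forall_dotProduct_mulVec_mem h2 hB hU,
    mem_iff_forall_fieldOrdering_nonneg h2 hB, le_iff]
  exact ⟨fun h P hP x => h x P hP, fun h x P hP => h P hP x⟩

end Diagonalization

section Weights

variable {M R ι : Type*} [CommMonoid M] [CommSemiring R] [Fintype ι]

/-- The product `b^e = ∏ j, b j ^ e j` with exponents in `{0, 1}`, encoded as Booleans. -/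
def weight (b : ι → M) (e : ι → Bool) : M :=
  ∏ j, if e j then b j else 1

theorem weight_mul_weight (b : ι → M) (e e' : ι → Bool) :
    weight b e * weight b e' =
      weight b (fun j => e j ^^ e' j) * weight b (fun j => e j && e' j) ^ 2 := by
  simp only [weight, ← Finset.prod_mul_distrib, ← Finset.prod_pow]
  refine Finset.prod_congr rfl fun j _ => ?_
  by_cases hj : e j <;> by_cases hj' : e' j <;> simp [hj, hj', sq]

theorem weight_const_false (b : ι → M) : weight b (fun _ => false) = 1 := by
  simp [weight]

theorem weight_decide_eq [DecidableEq ι] (b : ι → M) (j : ι) : weight b (fun i => i = j) = b j := by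
  simp [weight]

theorem weight_mem_preorderingClosure (b : ι → R) (e : ι → Bool) :
    weight b e ∈ preorderingClosure (Set.range b) := by
  refine prod_mem fun j _ => ?_
  split_ifs
  · exact Subsemiring.subset_closure (.inl (Set.mem_range_self j))
  · exact one_mem _

theorem exists_eq_weight_mul_sq {b : ι → R} {x : R}
    (hx : x ∈ Submonoid.closure (Set.range b ∪ {x | IsSquare x})) :
    ∃ e c, x = weight b e * c ^ 2 := by
  classical
  induction hx using Submonoid.closure_induction with
  | mem x hx =>
    obtain ⟨j, rfl⟩ | ⟨c, rfl⟩ := hx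
    · exact ⟨fun i => i = j, 1, by simp [weight_decide_eq]⟩
    · exact ⟨fun _ => false, c, by rw [weight_const_false]; ring⟩
  | one => exact ⟨fun _ => false, 1, by simp [weight_const_false]⟩
  | mul x y _ _ hx hy =>
    obtain ⟨e, c, rfl⟩ := hx
    obtain ⟨e', c', rfl⟩ := hy
    refine ⟨fun j => e j ^^ e' j, weight b (fun j => e j && e' j) * c * c', ?_⟩
    rw [mul_mul_mul_comm, weight_mul_weight]
    ring

theorem hermitianCone_preorderingClosure_range {m : Type*} [Fintype m] (b : ι → R) :
    hermitianCone m (preorderingClosure (Set.range b) : Set R) =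
      hermitianCone m (Set.range (weight b)) := by
  refine le_antisymm ?_ (hermitianCone_mono ?_)
  · rw [preorderingClosure, Subsemiring.coe_closure_eq, hermitianCone_addSubmonoidClosure,
      hermitianCone_le]
    intro s hs A
    obtain ⟨e, c, rfl⟩ := exists_eq_weight_mul_sq hs
    have h : (weight b e * c ^ 2) • (Aᵀ * A) = weight b e • ((c • A)ᵀ * (c • A)) := by
      simp only [transpose_smul, Matrix.smul_mul, Matrix.mul_smul, smul_smul, sq]
    exact h ▸ smul_transpose_mul_self_mem_hermitianCone (Set.mem_range_self e) (c • A)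
  · rintro _ ⟨e, rfl⟩
    exact weight_mem_preorderingClosure b e

end Weights

/-- A symmetric matrix is positive semidefinite at all orderings where `b₁,…,b_t` are
positive iff it is a weighted sum of hermitian squares, with weights the products
`b₁^{e₁} ⋯ b_t^{e_t}`, `e ∈ {0,1}^t`. -/
theorem stmt_1 {F : Type*} [Field F] (hF : (2 : F) ≠ 0) {n : ℕ} (hn : 1 ≤ n)
    {t : ℕ} (b : Fin t → F) (hb : ∀ j, b j ≠ 0)
    (U : Matrix (Fin n) (Fin n) F) (hU : Uᵀ = U) :
    (∀ P : FieldOrdering F, (∀ j, P.pos (b j)) → U.IsPSDAt P) ↔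
      ∃ (N : ℕ) (A : (Fin t → Bool) → Fin N → Matrix (Fin n) (Fin n) F),
        U = ∑ e : Fin t → Bool,
          (∏ j, if e j then b j else 1) • ∑ i, (A e i)ᵀ * A e i := by
  have pos_iff (P : FieldOrdering F) :
      (∀ j, P.pos (b j)) ↔ ∀ c ∈ Set.range b, P.nonneg c := by
    rw [Set.forall_mem_range]
    exact forall_congr' fun j => and_iff_left (hb j)
  calc (∀ P : FieldOrdering F, (∀ j, P.pos (b j)) → U.IsPSDAt P)
      ↔ U ∈ hermitianCone (Fin n) (preorderingClosure (Set.range b) : Set F) := by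
        simp only [pos_iff, IsPSDAt, mem_hermitianCone_preorderingClosure_iff hF _ hU]
    _ ↔ U ∈ hermitianCone (Fin n) (Set.range (weight b)) := by
        rw [hermitianCone_preorderingClosure_range]
    _ ↔ _ := mem_hermitianCone_range_iff
end

section
/- Let F be a field of characteristic different from 2 with a field ordering P, let Φ ∈ M_n(F) be symmetric and invertible, and suppose Φ is either positive definite or negative definite at P. Let σ be the involution on M_n(F) given by σ(X) = ΦXᵀΦ⁻¹, and let U ∈ M_n(F) be invertible with σ(U) = U. Then the form X ↦ tr(σ(X)UX) on M_n(F) is positive definite or negative definite at P if and only if the symmetric matrix Φ⁻¹U is positive definite or negative definite at P. -/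
open Matrix BigOperators

/-!
Write `M = Φ⁻¹U`, so that the form is `X ↦ tr(ΦXᵀMX)`; it is the tensor product of the forms of `Φ`
and `M`, and replacing `Φ` by `-Φ` only changes its sign. On the rank one matrix `xyᵀ` it takes the
value `(yᵀΦy)(xᵀMx)`, so its definiteness forces that of `M`. Conversely, if `Φ` is symmetric and
positive definite, then `Φ = CDCᵀ` with `C` invertible and `D` diagonal with positive entries `dᵢ`,
and `tr(ΦXᵀMX) = ∑ᵢ dᵢ yᵢᵀMyᵢ` where the `yᵢ` are the columns of `XC`.
-/

namespace FieldOrdering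

variable {F : Type*} [Field F] (P : FieldOrdering F)

lemma nonneg_zero : P.nonneg 0 :=
  (P.total 0).elim id fun h ↦ by rwa [neg_zero] at h

lemma nonneg_one : P.nonneg 1 :=
  (P.total 1).elim id fun h ↦ by simpa only [neg_mul_neg, one_mul] using P.mul_nonneg h h

/-- The nonnegative elements of a field ordering, as a cone in Mathlib's sense; it provides the
linear order `FieldOrdering.linearOrder`. -/
def ringCone : RingCone F where
  carrier := {x | P.nonneg x}
  mul_mem' := P.mul_nonneg
  one_mem' := P.nonneg_one
  add_mem' := P.add_nonneg
  zero_mem' := P.nonneg_zero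
  eq_zero_of_mem_of_neg_mem' := P.eq_zero_of

instance : HasMemOrNegMem P.ringCone := ⟨P.total⟩

open scoped Classical in
/-- The linear order `x ≤ y ↔ 0 ≤_P y - x` of a field ordering, through which the theory of
linearly ordered fields applies to `P`. -/
noncomputable abbrev linearOrder : LinearOrder F :=
  LinearOrder.mkOfAddGroupCone P.ringCone

lemma isStrictOrderedRing :
    letI := P.linearOrder
    IsStrictOrderedRing F :=
  letI := P.linearOrder
  haveI : IsOrderedRing F := IsOrderedRing.mkOfCone P.ringCone
  IsOrderedRing.toIsStrictOrderedRing F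

lemma pos_iff_zero_lt {x : F} :
    letI := P.linearOrder
    P.pos x ↔ 0 < x := by
  let := P.linearOrder
  have nonneg_iff : P.nonneg x ↔ 0 ≤ x := by
    change x ∈ P.ringCone ↔ x - 0 ∈ P.ringCone
    rw [sub_zero]
  rw [pos, nonneg_iff, lt_iff_le_and_ne, ne_comm]

end FieldOrdering

section CommSemiring

variable {R m n : Type*} [CommSemiring R] [Fintype m]

lemma transpose_mul_mul_apply_self (M : Matrix m m R) (Y : Matrix m n R) (i : n) :
    (Yᵀ * M * Y) i i = Y.col i ⬝ᵥ M *ᵥ Y.col i := by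
  rw [Matrix.mul_assoc]
  rfl

variable [Fintype n]

lemma trace_mul_transpose_vecMulVec_mul_mul_vecMulVec (A : Matrix n n R) (M : Matrix m m R)
    (x : m → R) (y : n → R) :
    (A * (vecMulVec x y)ᵀ * M * vecMulVec x y).trace = (y ⬝ᵥ A *ᵥ y) * (x ⬝ᵥ M *ᵥ x) := by
  rw [transpose_vecMulVec, Matrix.mul_assoc, mul_vecMulVec, mul_vecMulVec,
    vecMulVec_mul_vecMulVec, vecMulVec_smul, trace_smul, trace_vecMulVec,
    dotProduct_comm (A *ᵥ y), smul_eq_mul, mul_comm]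

lemma trace_mul_diagonal_mul_transpose_mul [DecidableEq n] (C : Matrix n n R) (d : n → R)
    (M : Matrix m m R) (X : Matrix m n R) :
    (C * diagonal d * Cᵀ * Xᵀ * M * X).trace =
      ∑ i, d i * ((X * C).col i ⬝ᵥ M *ᵥ (X * C).col i) :=
  calc (C * diagonal d * Cᵀ * Xᵀ * M * X).trace
      = (diagonal d * ((X * C)ᵀ * M * (X * C))).trace := by
        simp only [transpose_mul, Matrix.mul_assoc, trace_mul_comm C]
    _ = ∑ i, d i * ((X * C).col i ⬝ᵥ M *ᵥ (X * C).col i) := by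
        simp only [trace, diag_apply, diagonal_mul, transpose_mul_mul_apply_self]

end CommSemiring

lemma exists_isUnit_eq_mul_diagonal_mul_transpose {K n : Type*} [Field K] [Invertible (2 : K)]
    [Fintype n] [DecidableEq n] {A : Matrix n n K} (hA : A.IsSymm) :
    ∃ (C : Matrix n n K) (d : n → K), IsUnit C ∧ A = C * diagonal d * Cᵀ := by
  let e := Pi.basisFun K n
  let B := A.toBilin e
  obtain ⟨v, hv⟩ := LinearMap.BilinForm.exists_orthogonal_basis
    (LinearMap.BilinForm.isSymm_iff.1 ((isSymm_toBilin_iff_isSymm e).2 hA))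
  let w := v.reindex (Fintype.equivFinOfCardEq (Module.finrank_fintype_fun_eq_card K).symm).symm
  have hw : (B.toMatrix w).IsDiag := fun i j hij ↦ by
    refine (LinearMap.BilinForm.toMatrix_apply w B i j).trans ?_
    rw [v.reindex_apply, v.reindex_apply]
    exact hv (by simpa using hij)
  refine ⟨(w.toMatrix e)ᵀ, (B.toMatrix w).diag, ?_, ?_⟩
  · rw [isUnit_transpose]
    exact IsUnit.of_mul_eq_one _ (w.toMatrix_mul_toMatrix_flip e)
  · rw [hw.diagonal_diag, transpose_transpose, LinearMap.BilinForm.toMatrix_mul_basis_toMatrix,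
      LinearMap.BilinForm.toMatrix_toBilin]

section LinearOrderedField

variable {K m n : Type*} [Field K] [LinearOrder K] [IsStrictOrderedRing K] [Fintype m] [Fintype n]

lemma exists_isUnit_pos_eq_mul_diagonal_mul_transpose [DecidableEq n] {A : Matrix n n K}
    (hA : A.IsSymm) (hpos : ∀ y, y ≠ 0 → 0 < y ⬝ᵥ A *ᵥ y) :
    ∃ (C : Matrix n n K) (d : n → K), IsUnit C ∧ (∀ i, 0 < d i) ∧ A = C * diagonal d * Cᵀ := by
  have : Invertible (2 : K) := invertibleOfNonzero two_ne_zero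
  obtain ⟨C, d, hC, rfl⟩ := exists_isUnit_eq_mul_diagonal_mul_transpose hA
  refine ⟨C, d, hC, fun i ↦ ?_, rfl⟩
  obtain ⟨y, hy⟩ := mulVec_surjective_iff_isUnit.2 ((isUnit_transpose C).2 hC) (Pi.single i 1)
  have hy0 : y ≠ 0 := by
    rintro rfl
    simp [eq_comm] at hy
  have value_eq : y ⬝ᵥ (C * diagonal d * Cᵀ) *ᵥ y = d i := by
    rw [← mulVec_mulVec, ← mulVec_mulVec, dotProduct_mulVec, ← mulVec_transpose, hy]
    simp
  exact value_eq ▸ hpos y hy0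

lemma dotProduct_mulVec_pos_of_trace_pos {A : Matrix n n K} {M : Matrix m m K} {y : n → K}
    (hy : 0 < y ⬝ᵥ A *ᵥ y) (h : ∀ X : Matrix m n K, X ≠ 0 → 0 < (A * Xᵀ * M * X).trace)
    {x : m → K} (hx : x ≠ 0) : 0 < x ⬝ᵥ M *ᵥ x := by
  have hy0 : y ≠ 0 := by
    rintro rfl
    simp at hy
  have hxy : vecMulVec x y ≠ 0 := fun h0 ↦ by
    obtain ⟨i, hi⟩ := Function.ne_iff.1 hx
    obtain ⟨j, hj⟩ := Function.ne_iff.1 hy0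
    exact mul_ne_zero hi hj (congrFun₂ h0 i j)
  have hmul := h _ hxy
  rw [trace_mul_transpose_vecMulVec_mul_mul_vecMulVec] at hmul
  exact pos_of_mul_pos_right hmul hy.le

lemma trace_mul_transpose_mul_mul_pos {A : Matrix n n K} {M : Matrix m m K} (hA : A.IsSymm)
    (hApos : ∀ y, y ≠ 0 → 0 < y ⬝ᵥ A *ᵥ y) (hMpos : ∀ x, x ≠ 0 → 0 < x ⬝ᵥ M *ᵥ x)
    {X : Matrix m n K} (hX : X ≠ 0) : 0 < (A * Xᵀ * M * X).trace := by
  classical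
  obtain ⟨C, d, hC, hd, rfl⟩ := exists_isUnit_pos_eq_mul_diagonal_mul_transpose hA hApos
  have hXC : X * C ≠ 0 := fun h ↦ hX <| by
    rw [← mul_nonsing_inv_cancel_right C X ((isUnit_iff_isUnit_det C).1 hC), h, Matrix.zero_mul]
  obtain ⟨i, hi⟩ : ∃ i, (X * C).col i ≠ 0 := by
    by_contra! h
    exact hXC (ext_col h)
  have hM_nonneg (x : m → K) : 0 ≤ x ⬝ᵥ M *ᵥ x := by
    rcases eq_or_ne x 0 with rfl | hx
    · rw [zero_dotProduct]
    · exact (hMpos x hx).le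
  rw [trace_mul_diagonal_mul_transpose_mul]
  exact Finset.sum_pos' (fun j _ ↦ mul_nonneg (hd j).le (hM_nonneg _))
    ⟨i, Finset.mem_univ i, mul_pos (hd i) (hMpos _ hi)⟩

end LinearOrderedField

lemma FieldOrdering.forall_pos_trace_iff_isPDAt {F : Type*} [Field F] (P : FieldOrdering F) {n : ℕ}
    {A : Matrix (Fin n) (Fin n) F} (M : Matrix (Fin n) (Fin n) F) (hA : A.IsSymm)
    (hApos : A.IsPDAt P) :
    (∀ X : Matrix (Fin n) (Fin n) F, X ≠ 0 → P.pos (A * Xᵀ * M * X).trace) ↔ M.IsPDAt P := by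
  let := P.linearOrder
  have := P.isStrictOrderedRing
  simp only [IsPDAt, P.pos_iff_zero_lt] at hApos ⊢
  exact ⟨fun h x hx ↦ dotProduct_mulVec_pos_of_trace_pos (hApos x hx) h hx,
    fun hM X hX ↦ trace_mul_transpose_mul_mul_pos hA hApos hM hX⟩

theorem stmt_8_general {F : Type*} [Field F] {n : ℕ} (P : FieldOrdering F)
    (Φ : Matrix (Fin n) (Fin n) F) (hΦsym : Φᵀ = Φ) (hΦdef : Φ.IsPDAt P ∨ (-Φ).IsPDAt P)
    (U : Matrix (Fin n) (Fin n) F) :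
    ((∀ X : Matrix (Fin n) (Fin n) F, X ≠ 0 →
        P.pos ((Φ * Xᵀ * Φ⁻¹) * U * X).trace) ∨
     (∀ X : Matrix (Fin n) (Fin n) F, X ≠ 0 →
        P.pos (-((Φ * Xᵀ * Φ⁻¹) * U * X).trace))) ↔
      ((Φ⁻¹ * U).IsPDAt P ∨ (-(Φ⁻¹ * U)).IsPDAt P) := by
  have trace_eq (X : Matrix (Fin n) (Fin n) F) :
      Φ * Xᵀ * Φ⁻¹ * U * X = Φ * Xᵀ * (Φ⁻¹ * U) * X := by
    rw [Matrix.mul_assoc (Φ * Xᵀ)]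
  simp only [trace_eq]
  generalize Φ⁻¹ * U = M
  rcases hΦdef with hΦ | hΦ
  · have trace_form_iff (N) := P.forall_pos_trace_iff_isPDAt N hΦsym hΦ
    exact or_congr (trace_form_iff M) (by simpa using trace_form_iff (-M))
  · have trace_form_iff (N) := P.forall_pos_trace_iff_isPDAt N (IsSymm.neg hΦsym) hΦ
    rw [or_comm (a := M.IsPDAt P)]
    exact or_congr (by simpa using trace_form_iff (-M)) (by simpa using trace_form_iff M)

/-- For `σ = ad_Φ` with `Φ` positive or negative definite at `P` and `U` invertible
σ-symmetric, the trace form `X ↦ tr(σ(X)UX)` is positive or negative definite at `P`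
iff the symmetric matrix `Φ⁻¹U` is positive or negative definite at `P`. -/
theorem stmt_8 {F : Type*} [Field F] (hF : (2 : F) ≠ 0) {n : ℕ}
    (P : FieldOrdering F)
    (Φ : Matrix (Fin n) (Fin n) F) (hΦsym : Φᵀ = Φ) (hΦ : IsUnit Φ.det)
    (hΦdef : Φ.IsPDAt P ∨ (-Φ).IsPDAt P)
    (U : Matrix (Fin n) (Fin n) F) (hUunit : IsUnit U) (hUσ : Φ * Uᵀ * Φ⁻¹ = U) :
    ((∀ X : Matrix (Fin n) (Fin n) F, X ≠ 0 →
        P.pos ((Φ * Xᵀ * Φ⁻¹) * U * X).trace) ∨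
     (∀ X : Matrix (Fin n) (Fin n) F, X ≠ 0 →
        P.pos (-((Φ * Xᵀ * Φ⁻¹) * U * X).trace))) ↔
      ((Φ⁻¹ * U).IsPDAt P ∨ (-(Φ⁻¹ * U)).IsPDAt P) :=
  stmt_8_general P Φ hΦsym hΦdef U
end

section
/- Let F be a field of characteristic different from 2, let Φ ∈ M_n(F) be symmetric and invertible, and let σ be the involution on M_n(F) given by σ(X) = ΦXᵀΦ⁻¹. Assume that at every field ordering P of F the matrix Φ is positive definite or negative definite at P. Then for every U ∈ M_n(F) with σ(U) = U, the following are equivalent: (i) tr(σ(X)UX) ≥_P 0 for every X ∈ M_n(F) and every field ordering P of F; (ii) there exist finitely many matrices X_1, ..., X_N ∈ M_n(F) such that U = Σ_{i=1}^{N} σ(X_i)X_i. -/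
open Matrix BigOperators

/-! For `M = Φ⁻¹U`, which is symmetric, testing (i) on the rank-one matrices `X = y vᵀ` gives
`tr(σ(X)UX) = (vᵀΦv)(yᵀMy)`. Fix `v` with `vᵀΦv ≠ 0`. By Artin's theorem each `(vᵀΦv)(yᵀMy)` is a
sum of squares, so diagonalizing `M = ∑ⱼ (yⱼᵀMyⱼ) eⱼeⱼᵀ` writes `U = ΦM` as a sum of matrices
`Φ · a²(vᵀΦv) eeᵀ`, and these are the hermitian squares `σ(X)X` of `X = a Φveᵀ`.
Conversely `tr(σ(X)X) = tr(Φ · VᵀΦV)` for `V = Φ⁻¹X`, and diagonalizing the left factor `Φ` expands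
this as a sum of products of two values of the quadratic form `Φ`, which does not change sign. -/

section Preordering

theorem exists_isMax_preordering_ge {R : Type*} [CommRing R] (T : RingPreordering R) :
    ∃ Q : RingPreordering R, T ≤ Q ∧ IsMax Q := by
  refine zorn_le_nonempty_Ici₀ T (fun c _ hc y hy => ?_) T le_rfl
  have mem_sSup_iff (x : R) :
      x ∈ sSup (RingPreordering.toSubsemiring '' c) ↔ ∃ Q ∈ c, x ∈ Q := by
    rw [Subsemiring.mem_sSup_of_directedOn (Set.Nonempty.image _ ⟨y, hy⟩)
      (directedOn_image.mpr hc.directedOn)]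
    simp
  let sup : RingPreordering R :=
    { toSubsemiring := sSup (RingPreordering.toSubsemiring '' c)
      mem_of_isSquare' hx := (mem_sSup_iff _).2 ⟨y, hy, y.mem_of_isSquare hx⟩
      neg_one_notMem' h :=
        have ⟨Q, _, hQ⟩ := (mem_sSup_iff _).1 h
        Q.neg_one_notMem hQ }
  exact ⟨sup, fun Q hQ x hx => (mem_sSup_iff x).2 ⟨Q, hQ, hx⟩⟩

variable {F : Type*} [Field F]

theorem exists_preordering_ge_mem_of_neg_notMem {T : RingPreordering F} {a : F} (ha : -a ∉ T) :
    ∃ Q : RingPreordering F, T ≤ Q ∧ a ∈ Q := by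
  let C : Set F := {x | ∃ s ∈ T, ∃ t ∈ T, x = s + a * t}
  have sq_mem (x : F) : x * x ∈ C :=
    ⟨x * x, T.mul_self_mem x, 0, zero_mem T, by ring⟩
  have neg_one_notMem : -1 ∉ C := by
    rintro ⟨s, hs, t, ht, h⟩
    have ht0 : t ≠ 0 := by
      rintro rfl
      exact T.neg_one_notMem (by simpa [h] using hs)
    have neg_a_eq : -a = (1 + s) * t⁻¹ := by
      field_simp
      linear_combination h
    exact ha (neg_a_eq ▸ mul_mem (add_mem (one_mem T) hs) (RingPreordering.inv_mem ht))
  refine ⟨RingPreordering.mk' C ?_ ?_ sq_mem neg_one_notMem,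
    fun s hs => ⟨s, hs, 0, zero_mem T, by ring⟩, ⟨0, zero_mem T, 1, one_mem T, by ring⟩⟩
  · rintro _ _ ⟨s, hs, t, ht, rfl⟩ ⟨s', hs', t', ht', rfl⟩
    exact ⟨s + s', add_mem hs hs', t + t', add_mem ht ht', by ring⟩
  · rintro _ _ ⟨s, hs, t, ht, rfl⟩ ⟨s', hs', t', ht', rfl⟩
    exact ⟨s * s' + a * a * (t * t'),
      add_mem (mul_mem hs hs') (mul_mem (T.mul_self_mem a) (mul_mem ht ht')),
      s * t' + t * s', add_mem (mul_mem hs ht') (mul_mem ht hs'), by ring⟩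

theorem hasMemOrNegMem_of_isMax {T : RingPreordering F} (hT : IsMax T) : HasMemOrNegMem T where
  mem_or_neg_mem _ := or_iff_not_imp_right.2 fun ha =>
    have ⟨_, hle, hmem⟩ := exists_preordering_ge_mem_of_neg_notMem ha
    hT hle hmem

end Preordering

namespace FieldOrdering

variable {F : Type*} [Field F]

/-- The field ordering whose nonnegative cone is a preordering that contains `x` or `-x` for
every `x`. -/
def ofPreordering (T : RingPreordering F) [HasMemOrNegMem T] : FieldOrdering F where
  nonneg x := x ∈ T
  add_nonneg := add_mem
  mul_nonneg := mul_mem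
  total := mem_or_neg_mem T
  eq_zero_of := RingPreordering.eq_zero_of_mem_of_neg_mem

theorem exists_nonneg_of_mem_preordering (T : RingPreordering F) :
    ∃ P : FieldOrdering F, ∀ x ∈ T, P.nonneg x := by
  obtain ⟨Q, hTQ, hQ⟩ := exists_isMax_preordering_ge T
  have := hasMemOrNegMem_of_isMax hQ
  exact ⟨ofPreordering Q, fun _ hx => hTQ hx⟩

theorem zero_nonneg (P : FieldOrdering F) : P.nonneg 0 := by
  simpa using P.total 0

theorem sum_nonneg (P : FieldOrdering F) {ι : Type*} {s : Finset ι} {f : ι → F}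
    (h : ∀ i ∈ s, P.nonneg (f i)) : P.nonneg (∑ i ∈ s, f i) :=
  Finset.sum_induction f P.nonneg (fun _ _ => P.add_nonneg) P.zero_nonneg h

end FieldOrdering

section SumSq

variable {F : Type*} [Field F] [NeZero (2 : F)]

theorem isSumSq_of_isSumSq_neg_one (h : IsSumSq (-1 : F)) (a : F) : IsSumSq a := by
  have eq_sub_sq : a = (a + 1) / 2 * ((a + 1) / 2) + -1 * ((a - 1) / 2 * ((a - 1) / 2)) := by
    field_simp
    ring
  rw [eq_sub_sq]
  exact (IsSumSq.mul_self _).add (h.mul (IsSumSq.mul_self _))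

theorem isSumSq_of_forall_nonneg {a : F} (ha : ∀ P : FieldOrdering F, P.nonneg a) :
    IsSumSq a := by
  by_contra not_sumSq
  let sumSq : RingPreordering F :=
    { toSubsemiring := Subsemiring.sumSq F
      mem_of_isSquare' hx := Subsemiring.mem_sumSq.2 hx.isSumSq
      neg_one_notMem' h :=
        not_sumSq (isSumSq_of_isSumSq_neg_one (Subsemiring.mem_sumSq.1 h) a) }
  have neg_neg_notMem : -(-a) ∉ sumSq := by
    rw [neg_neg]
    exact mt Subsemiring.mem_sumSq.1 not_sumSq
  obtain ⟨Q, -, neg_mem⟩ := exists_preordering_ge_mem_of_neg_notMem neg_neg_notMem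
  obtain ⟨P, hP⟩ := FieldOrdering.exists_nonneg_of_mem_preordering Q
  exact not_sumSq (P.eq_zero_of (ha P) (hP _ neg_mem) ▸ IsSumSq.zero)

end SumSq

section QuadraticForm

variable {m n R : Type*} [Fintype m] [Fintype n] [CommRing R]

theorem trace_vecMulVec_mul (x : m → R) (y : n → R) (A : Matrix n m R) :
    (vecMulVec x y * A).trace = y ⬝ᵥ A *ᵥ x := by
  rw [vecMulVec_mul, trace_vecMulVec, dotProduct_comm, dotProduct_mulVec]

theorem dotProduct_transpose_mul_mul_mulVec (A : Matrix m m R) (W : Matrix m n R) (y : n → R) :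
    y ⬝ᵥ (Wᵀ * A * W) *ᵥ y = (W *ᵥ y) ⬝ᵥ A *ᵥ (W *ᵥ y) := by
  rw [← mulVec_mulVec, ← mulVec_mulVec, dotProduct_mulVec, vecMul_transpose]

theorem dotProductEquiv_symm_coord_dotProduct [DecidableEq n] {ι : Type*} [DecidableEq ι]
    (b : Module.Basis ι R (n → R)) (j k : ι) :
    (dotProductEquiv R n).symm (b.coord j) ⬝ᵥ b k = if k = j then 1 else 0 := by
  rw [← dotProductEquiv_apply_apply, LinearEquiv.apply_symm_apply, Module.Basis.coord_apply,
    Module.Basis.repr_self, Finsupp.single_apply]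

theorem eq_sum_smul_vecMulVec_of_isOrthoᵢ [DecidableEq n] {ι : Type*} [Fintype ι] [DecidableEq ι]
    {M : Matrix n n R} {b : Module.Basis ι R (n → R)} {e : ι → n → R}
    (hb : (toBilin' M).IsOrthoᵢ b) (he : ∀ j k, e j ⬝ᵥ b k = if k = j then 1 else 0) :
    M = ∑ j, (b j ⬝ᵥ M *ᵥ b j) • vecMulVec (e j) (e j) := by
  have form_basis (i k : ι) : b i ⬝ᵥ M *ᵥ b k = if k = i then b i ⬝ᵥ M *ᵥ b i else 0 := by
    split_ifs with hki
    · rw [hki]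
    · simpa only [Function.onFun, toBilin'_apply'] using hb (Ne.symm hki)
  refine (toBilin' (R₁ := R)).injective (LinearMap.BilinForm.ext_basis b fun i k => ?_)
  simp only [map_sum, map_smul, LinearMap.sum_apply, LinearMap.smul_apply, toBilin'_apply',
    vecMulVec_mulVec, op_smul_eq_smul, dotProduct_smul, smul_eq_mul, dotProduct_comm (b i) (e _),
    he, form_basis i k]
  simp

theorem isSymm_toBilin'_of_isSymm [DecidableEq n] {M : Matrix n n R} (hM : M.IsSymm) :
    LinearMap.IsSymm (toBilin' M) :=
  LinearMap.BilinForm.isSymm_iff.1 (isSymm_toBilin'_iff_isSymm.2 hM)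

variable {F : Type*} [Field F] [NeZero (2 : F)] {M : Matrix n n F}

theorem exists_eq_sum_smul_vecMulVec (hM : M.IsSymm) :
    ∃ (d : ℕ) (y e : Fin d → n → F), M = ∑ j, (y j ⬝ᵥ M *ᵥ y j) • vecMulVec (e j) (e j) := by
  classical
  let := invertibleOfNonzero (two_ne_zero (α := F))
  obtain ⟨b, hb⟩ :=
    LinearMap.BilinForm.exists_orthogonal_basis (isSymm_toBilin'_of_isSymm hM)
  exact ⟨_, _, _,
    eq_sum_smul_vecMulVec_of_isOrthoᵢ hb (dotProductEquiv_symm_coord_dotProduct b)⟩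

theorem exists_dotProduct_mulVec_self_ne_zero (hM : M.IsSymm) (hM0 : M ≠ 0) :
    ∃ v : n → F, v ⬝ᵥ M *ᵥ v ≠ 0 := by
  classical
  let := invertibleOfNonzero (two_ne_zero (α := F))
  simpa only [toBilin'_apply'] using LinearMap.BilinForm.exists_bilinForm_self_ne_zero
    ((map_ne_zero_iff _ toBilin'.injective).2 hM0) (isSymm_toBilin'_of_isSymm hM)

theorem FieldOrdering.trace_mul_nonneg (P : FieldOrdering F) {A B : Matrix n n F} (hA : A.IsSymm)
    (hAB : ∀ x y : n → F, P.nonneg ((x ⬝ᵥ A *ᵥ x) * (y ⬝ᵥ B *ᵥ y))) :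
    P.nonneg (A * B).trace := by
  obtain ⟨d, y, e, hye⟩ := exists_eq_sum_smul_vecMulVec hA
  have trace_eq : (A * B).trace = ∑ j, (y j ⬝ᵥ A *ᵥ y j) * (e j ⬝ᵥ B *ᵥ e j) := by
    conv_lhs => rw [hye]
    simp only [Matrix.sum_mul, trace_sum, smul_mul, trace_smul, trace_vecMulVec_mul, smul_eq_mul]
  rw [trace_eq]
  exact P.sum_nonneg fun j _ => hAB (y j) (e j)

end QuadraticForm

section AdjointInvolution

variable {n R : Type*} [Fintype n] [DecidableEq n] [CommRing R]

/-- The involution `ad_Φ : X ↦ ΦXᵀΦ⁻¹` adjoint to the symmetric bilinear form of `Φ⁻¹`. -/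
noncomputable def adjointInvolution (Φ X : Matrix n n R) : Matrix n n R :=
  Φ * Xᵀ * Φ⁻¹

/-- The finite sums of hermitian squares `σ(X)X`, where `σ = ad_Φ`. -/
def sumHermitianSq (Φ : Matrix n n R) : AddSubmonoid (Matrix n n R) :=
  AddSubmonoid.closure (Set.range fun X => adjointInvolution Φ X * X)

variable {Φ U : Matrix n n R}

theorem mem_sumHermitianSq_iff :
    U ∈ sumHermitianSq Φ ↔
      ∃ (N : ℕ) (X : Fin N → Matrix n n R), U = ∑ i, adjointInvolution Φ (X i) * X i := by
  constructor
  · intro hU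
    induction hU using AddSubmonoid.closure_induction_left with
    | zero => exact ⟨0, Fin.elim0, by simp⟩
    | add_left _ hx _ _ ih =>
      obtain ⟨Z, rfl⟩ := hx
      obtain ⟨N, X, rfl⟩ := ih
      exact ⟨N + 1, Fin.cons Z X, by simp [Fin.sum_univ_succ]⟩
  · rintro ⟨N, X, rfl⟩
    exact sum_mem fun i _ => AddSubmonoid.subset_closure ⟨X i, rfl⟩

theorem adjointInvolution_mul (hΦ : IsUnit Φ.det) (X Y : Matrix n n R) :
    adjointInvolution Φ (X * Y) = adjointInvolution Φ Y * adjointInvolution Φ X := by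
  simp only [adjointInvolution, transpose_mul, Matrix.mul_assoc, nonsing_inv_mul_cancel_left _ _ hΦ]

theorem adjointInvolution_mul_mul_mem_sumHermitianSq (hΦ : IsUnit Φ.det)
    (hU : U ∈ sumHermitianSq Φ) (X : Matrix n n R) :
    adjointInvolution Φ X * U * X ∈ sumHermitianSq Φ := by
  obtain ⟨N, Z, rfl⟩ := mem_sumHermitianSq_iff.1 hU
  refine mem_sumHermitianSq_iff.2 ⟨N, fun i => Z i * X, ?_⟩
  simp only [adjointInvolution_mul hΦ, Matrix.mul_sum, Matrix.sum_mul, Matrix.mul_assoc]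

theorem adjointInvolution_mul_mul_self (hΦsym : Φ.IsSymm) (hΦ : IsUnit Φ.det)
    (V : Matrix n n R) : adjointInvolution Φ (Φ * V) * (Φ * V) = Φ * (Vᵀ * Φ * V) := by
  simp only [adjointInvolution, transpose_mul, hΦsym.eq, Matrix.mul_assoc,
    nonsing_inv_mul_cancel_left _ _ hΦ]

theorem isSymm_inv_mul_of_adjointInvolution_eq (hΦsym : Φ.IsSymm) (hΦ : IsUnit Φ.det)
    (hU : adjointInvolution Φ U = U) : (Φ⁻¹ * U).IsSymm := by
  rw [IsSymm, transpose_mul, transpose_nonsing_inv, hΦsym.eq]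
  nth_rw 2 [← hU]
  rw [adjointInvolution, Matrix.mul_assoc, nonsing_inv_mul_cancel_left _ _ hΦ]

theorem trace_adjointInvolution_vecMulVec (Φ U : Matrix n n R) (y v : n → R) :
    (adjointInvolution Φ (vecMulVec y v) * U * vecMulVec y v).trace =
      (v ⬝ᵥ Φ *ᵥ v) * (y ⬝ᵥ (Φ⁻¹ * U) *ᵥ y) := by
  have mul_eq : adjointInvolution Φ (vecMulVec y v) * U =
      vecMulVec (Φ *ᵥ v) (y ᵥ* (Φ⁻¹ * U)) := by
    rw [adjointInvolution, transpose_vecMulVec, mul_vecMulVec, Matrix.mul_assoc, vecMulVec_mul]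
  rw [mul_eq, vecMulVec_mul_vecMulVec, trace_vecMulVec, dotProduct_smul, smul_eq_mul,
    ← dotProduct_mulVec, dotProduct_comm (Φ *ᵥ v), mul_comm]

theorem mul_smul_vecMulVec_mem_sumHermitianSq (hΦsym : Φ.IsSymm) (hΦ : IsUnit Φ.det)
    (v e : n → R) {s : R} (hs : IsSumSq s) :
    Φ * ((s * (v ⬝ᵥ Φ *ᵥ v)) • vecMulVec e e) ∈ sumHermitianSq Φ := by
  induction hs with
  | zero => simp
  | @sq_add a s _ ih =>
    have square_eq : (vecMulVec (a • v) e)ᵀ * Φ * vecMulVec (a • v) e =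
        (a * a * (v ⬝ᵥ Φ *ᵥ v)) • vecMulVec e e := by
      rw [Matrix.mul_assoc, transpose_vecMulVec, mul_vecMulVec, vecMulVec_mul_vecMulVec,
        vecMulVec_smul, mulVec_smul, smul_dotProduct, dotProduct_smul, smul_eq_mul, smul_eq_mul,
        mul_assoc]
    rw [add_mul, add_smul, Matrix.mul_add, ← square_eq,
      ← adjointInvolution_mul_mul_self hΦsym hΦ]
    exact add_mem (AddSubmonoid.subset_closure ⟨_, rfl⟩) ih

variable {F : Type*} [Field F] [NeZero (2 : F)] {Φ U : Matrix n n F}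

theorem trace_nonneg_of_mem_sumHermitianSq (hΦsym : Φ.IsSymm) (hΦ : IsUnit Φ.det)
    {P : FieldOrdering F}
    (hP : (∀ x, P.nonneg (x ⬝ᵥ Φ *ᵥ x)) ∨ ∀ x, P.nonneg (x ⬝ᵥ (-Φ) *ᵥ x))
    (hU : U ∈ sumHermitianSq Φ) : P.nonneg U.trace := by
  have mul_nonneg (x y : n → F) : P.nonneg ((x ⬝ᵥ Φ *ᵥ x) * (y ⬝ᵥ Φ *ᵥ y)) := by
    rcases hP with h | h
    · exact P.mul_nonneg (h x) (h y)
    · simpa [neg_mulVec] using P.mul_nonneg (h x) (h y)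
  obtain ⟨N, X, rfl⟩ := mem_sumHermitianSq_iff.1 hU
  rw [trace_sum]
  refine P.sum_nonneg fun i _ => ?_
  rw [← mul_nonsing_inv_cancel_left Φ (X i) hΦ, adjointInvolution_mul_mul_self hΦsym hΦ]
  refine P.trace_mul_nonneg hΦsym fun x y => ?_
  rw [dotProduct_transpose_mul_mul_mulVec]
  exact mul_nonneg x _

theorem mem_sumHermitianSq_of_forall_trace_nonneg (hΦsym : Φ.IsSymm) (hΦ : IsUnit Φ.det)
    (hUσ : adjointInvolution Φ U = U)
    (h : ∀ (P : FieldOrdering F) (X : Matrix n n F),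
      P.nonneg (adjointInvolution Φ X * U * X).trace) :
    U ∈ sumHermitianSq Φ := by
  cases isEmpty_or_nonempty n
  · rw [Subsingleton.elim U 0]
    exact zero_mem _
  have hΦ0 : Φ ≠ 0 := by
    rintro rfl
    simp at hΦ
  obtain ⟨v, hv⟩ := exists_dotProduct_mulVec_self_ne_zero hΦsym hΦ0
  have isSumSq_mul (y : n → F) : IsSumSq ((v ⬝ᵥ Φ *ᵥ v) * (y ⬝ᵥ (Φ⁻¹ * U) *ᵥ y)) :=
    isSumSq_of_forall_nonneg fun P =>
      trace_adjointInvolution_vecMulVec Φ U y v ▸ h P (vecMulVec y v)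
  have isSumSq_div (y : n → F) : IsSumSq ((y ⬝ᵥ (Φ⁻¹ * U) *ᵥ y) / (v ⬝ᵥ Φ *ᵥ v)) := by
    convert (isSumSq_mul y).mul (IsSumSq.mul_self (v ⬝ᵥ Φ *ᵥ v)⁻¹) using 1
    field_simp
  obtain ⟨d, y, e, hye⟩ := exists_eq_sum_smul_vecMulVec
    (isSymm_inv_mul_of_adjointInvolution_eq hΦsym hΦ hUσ)
  rw [← mul_nonsing_inv_cancel_left Φ U hΦ, hye, Matrix.mul_sum]
  refine sum_mem fun j _ => ?_
  rw [← div_mul_cancel₀ (y j ⬝ᵥ (Φ⁻¹ * U) *ᵥ y j) hv]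
  exact mul_smul_vecMulVec_mem_sumHermitianSq hΦsym hΦ v (e j) (isSumSq_div (y j))

theorem stmt_12_general (hΦsym : Φ.IsSymm) (hΦ : IsUnit Φ.det)
    (hΦsemidef : ∀ P : FieldOrdering F,
      (∀ x, P.nonneg (x ⬝ᵥ Φ *ᵥ x)) ∨ ∀ x, P.nonneg (x ⬝ᵥ (-Φ) *ᵥ x))
    (hUσ : adjointInvolution Φ U = U) :
    (∀ (P : FieldOrdering F) (X : Matrix n n F),
        P.nonneg (adjointInvolution Φ X * U * X).trace) ↔
      ∃ (N : ℕ) (X : Fin N → Matrix n n F), U = ∑ i, adjointInvolution Φ (X i) * X i := by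
  rw [← mem_sumHermitianSq_iff]
  exact ⟨mem_sumHermitianSq_of_forall_trace_nonneg hΦsym hΦ hUσ, fun hU P X =>
    trace_nonneg_of_mem_sumHermitianSq hΦsym hΦ (hΦsemidef P)
      (adjointInvolution_mul_mul_mem_sumHermitianSq hΦ hU X)⟩

end AdjointInvolution

theorem isPSDAt_of_isPDAt {F : Type*} [Field F] {n : ℕ} {P : FieldOrdering F}
    {M : Matrix (Fin n) (Fin n) F} (hM : M.IsPDAt P) : M.IsPSDAt P := by
  intro x
  rcases eq_or_ne x 0 with rfl | hx
  · simpa using P.zero_nonneg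
  · exact (hM x hx).1

/-- Property (PS) holds when `σ = ad_Φ` is positive at every ordering, split orthogonal
case: if `Φ` is positive or negative definite at every ordering of `F`, then a
σ-symmetric `U` has positive semidefinite trace form `X ↦ tr(σ(X)UX)` at every ordering
iff `U` is a finite sum of hermitian squares `σ(X)X`. -/
theorem stmt_12 {F : Type*} [Field F] (hF : (2 : F) ≠ 0) {n : ℕ}
    (Φ : Matrix (Fin n) (Fin n) F) (hΦsym : Φᵀ = Φ) (hΦ : IsUnit Φ.det)
    (hΦdef : ∀ P : FieldOrdering F, Φ.IsPDAt P ∨ (-Φ).IsPDAt P)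
    (U : Matrix (Fin n) (Fin n) F) (hUσ : Φ * Uᵀ * Φ⁻¹ = U) :
    (∀ (P : FieldOrdering F) (X : Matrix (Fin n) (Fin n) F),
        P.nonneg ((Φ * Xᵀ * Φ⁻¹) * U * X).trace) ↔
      ∃ (N : ℕ) (X : Fin N → Matrix (Fin n) (Fin n) F),
        U = ∑ i, (Φ * (X i)ᵀ * Φ⁻¹) * X i := by
  have : NeZero (2 : F) := ⟨hF⟩
  exact stmt_12_general hΦsym hΦ (fun P => (hΦdef P).imp isPSDAt_of_isPDAt isPSDAt_of_isPDAt) hUσ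
end
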